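/- arXiv:2506.11223 — 7 statements merged into one kernel-verified Lean document; each statement's English description precedes it below -/
import Mathlib

section
/- Let G be a connected finite simple graph with n vertices. Then the total irregularity and the Albertson index satisfy irr_t(G) ≤ (n²/4)·irr(G). -/
/-!
Decompose degree differences by thresholds: `|d_u - d_v|` is the number of `k` that separate
`d_u` from `d_v`, i.e. such that exactly one of `d_u ≤ k`, `d_v ≤ k` holds
(`absDegDiff_eq_sum_sep`). For a fixed `k`, let `A` be the set of vertices of degree at most `k`.
The unordered pairs separated at `k` number at most `|A| (n - |A|) ≤ n² / 4`
(`sum_sep_le_card_mul_card`). If there is such a pair at all, connectedness gives an edge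
between `A` and its complement, so at least one edge is separated at `k`
(`one_le_sum_sep_edgeFinset`). Summing the resulting inequality over `k` gives the claim.
-/

open Finset

/-- The Albertson index: `irr(G) = Σ_{uv ∈ E(G)} |d_u − d_v|`. -/
noncomputable def albertson {V : Type*} [Fintype V] [DecidableEq V] (G : SimpleGraph V)
    [DecidableRel G.Adj] : ℝ :=
  ∑ e ∈ G.edgeFinset,
    Sym2.lift ⟨fun u v => |(G.degree u : ℝ) - (G.degree v : ℝ)|,
      fun _ _ => abs_sub_comm _ _⟩ e

/-- The total irregularity: `irr_t(G) = Σ_{{u,v} ⊆ V(G)} |d_u − d_v|`,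
the sum over unordered pairs of vertices. -/
noncomputable def totalIrr {V : Type*} [Fintype V] [DecidableEq V] (G : SimpleGraph V)
    [DecidableRel G.Adj] : ℝ :=
  ∑ e ∈ (Finset.univ : Finset V).sym2,
    Sym2.lift ⟨fun u v => |(G.degree u : ℝ) - (G.degree v : ℝ)|,
      fun _ _ => abs_sub_comm _ _⟩ e

/-- Indicator that the degrees of the two ends of `e` lie on different sides of the threshold `k`,
a vertex of degree exactly `k` being on the lower side. -/
noncomputable def sep {V : Type*} [Fintype V] (G : SimpleGraph V)
    [DecidableRel G.Adj] (k : ℕ) (e : Sym2 V) : ℝ :=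
  Sym2.lift ⟨fun u v => if (G.degree u ≤ k ↔ G.degree v ≤ k) then (0 : ℝ) else 1,
    fun u v => by simp only [iff_comm]⟩ e

theorem sep_mk {V : Type*} [Fintype V] (G : SimpleGraph V)
    [DecidableRel G.Adj] (k : ℕ) (u v : V) :
    sep G k s(u, v) = if (G.degree u ≤ k ↔ G.degree v ≤ k) then (0 : ℝ) else 1 := rfl

theorem sep_nonneg {V : Type*} [Fintype V] (G : SimpleGraph V)
    [DecidableRel G.Adj] (k : ℕ) (e : Sym2 V) : 0 ≤ sep G k e := by
  induction e with | _ u v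
  rw [sep_mk]
  split_ifs <;> norm_num

theorem abs_sub_eq_sum_range {a b N : ℕ} (ha : a ≤ N) (hb : b ≤ N) :
    |(a : ℝ) - b| = ∑ k ∈ range N, if (a ≤ k ↔ b ≤ k) then (0 : ℝ) else 1 := by
  wlog h : a ≤ b generalizing a b
  · rw [abs_sub_comm, this hb ha (by omega)]
    simp only [iff_comm]
  have hfilter : (range N).filter (fun k => ¬ (a ≤ k ↔ b ≤ k)) = Ico a b := by
    ext k
    simp only [mem_filter, mem_range, mem_Ico]
    omega
  have hab : (a : ℝ) ≤ b := by exact_mod_cast h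
  simp_rw [← ite_not (_ ↔ _)]
  rw [sum_boole, hfilter, Nat.card_Ico, Nat.cast_sub h, abs_sub_comm, abs_of_nonneg (by linarith)]

theorem absDegDiff_eq_sum_sep {V : Type*} [Fintype V] (G : SimpleGraph V)
    [DecidableRel G.Adj] (e : Sym2 V) :
    Sym2.lift ⟨fun u v => |(G.degree u : ℝ) - (G.degree v : ℝ)|,
      fun _ _ => abs_sub_comm _ _⟩ e = ∑ k ∈ range (Fintype.card V), sep G k e := by
  induction e with | _ u v
  simp only [sep_mk]
  exact abs_sub_eq_sum_range (G.degree_lt_card_verts u).le (G.degree_lt_card_verts v).le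

theorem sum_sep_le_card_mul_card {V : Type*} [Fintype V] [DecidableEq V] (G : SimpleGraph V)
    [DecidableRel G.Adj] (k : ℕ) :
    ∑ e ∈ (univ : Finset V).sym2, sep G k e ≤
      (#{v : V | G.degree v ≤ k} : ℝ) * #{v : V | ¬ G.degree v ≤ k} := by
  set A : Finset V := {v : V | G.degree v ≤ k} with hA
  set B : Finset V := {v : V | ¬ G.degree v ≤ k} with hB
  -- The separated pairs are all of the form `s(u, v)` with `u ∈ A` and `v ∈ B`.
  let T : Finset (Sym2 V) := (A ×ˢ B).image (fun p => s(p.1, p.2))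
  have hle : ∀ e ∈ (univ : Finset V).sym2, sep G k e ≤ if e ∈ T then (1 : ℝ) else 0 := by
    intro e _
    induction e with | _ u v
    rw [sep_mk]
    by_cases h : (G.degree u ≤ k ↔ G.degree v ≤ k)
    · rw [if_pos h]
      split_ifs <;> norm_num
    · rw [if_neg h, if_pos]
      simp only [T, mem_image, mem_product, Prod.exists, hA, hB, mem_filter, mem_univ, true_and]
      by_cases hu : G.degree u ≤ k
      · exact ⟨u, v, ⟨hu, by tauto⟩, rfl⟩
      · exact ⟨v, u, ⟨by tauto, hu⟩, Sym2.eq_swap⟩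
  refine (sum_le_sum hle).trans ?_
  rw [sum_boole]
  have hcard : #{e ∈ (univ : Finset V).sym2 | e ∈ T} ≤ #A * #B := by
    rw [← card_product]
    exact (card_le_card fun e he => (mem_filter.mp he).2).trans card_image_le
  exact_mod_cast hcard

theorem one_le_sum_sep_edgeFinset {V : Type*} [Fintype V] [DecidableEq V] (G : SimpleGraph V)
    [DecidableRel G.Adj] (hG : G.Connected) {k : ℕ} {a b : V}
    (ha : G.degree a ≤ k) (hb : ¬ G.degree b ≤ k) :
    1 ≤ ∑ e ∈ G.edgeFinset, sep G k e := by
  obtain ⟨p⟩ := hG.preconnected a b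
  -- A walk from `a` to `b` must leave the set of vertices of degree at most `k`.
  obtain ⟨d, -, hd₁, hd₂⟩ := p.exists_boundary_dart {v | G.degree v ≤ k} ha hb
  have hsep : sep G k s(d.fst, d.snd) = 1 := by
    rw [sep_mk, if_neg]
    exact fun h => hd₂ (h.mp hd₁)
  rw [← hsep]
  exact single_le_sum (fun e _ => sep_nonneg G k e)
    (SimpleGraph.mem_edgeFinset.mpr ((SimpleGraph.mem_edgeSet G).mpr d.adj))

/-- The claimed inequality restricted to a single threshold. -/
theorem sum_sep_sym2_le {V : Type*} [Fintype V] [DecidableEq V] (G : SimpleGraph V)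
    [DecidableRel G.Adj] (hG : G.Connected) (k : ℕ) :
    ∑ e ∈ (univ : Finset V).sym2, sep G k e ≤
      ((Fintype.card V : ℝ) ^ 2 / 4) * ∑ e ∈ G.edgeFinset, sep G k e := by
  refine (sum_sep_le_card_mul_card G k).trans ?_
  have hAB : (#{v : V | G.degree v ≤ k} : ℝ) + #{v : V | ¬ G.degree v ≤ k} = Fintype.card V := by
    exact_mod_cast card_filter_add_card_filter_not (s := (univ : Finset V)) (G.degree · ≤ k)
  set A : Finset V := {v : V | G.degree v ≤ k} with hA
  set B : Finset V := {v : V | ¬ G.degree v ≤ k} with hB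
  have hsum : 0 ≤ ∑ e ∈ G.edgeFinset, sep G k e := sum_nonneg fun e _ => sep_nonneg G k e
  rcases A.eq_empty_or_nonempty with h | ⟨a, ha⟩
  · rw [h, card_empty, Nat.cast_zero, zero_mul]
    positivity
  rcases B.eq_empty_or_nonempty with h | ⟨b, hb⟩
  · rw [h, card_empty, Nat.cast_zero, mul_zero]
    positivity
  have hone := one_le_sum_sep_edgeFinset G hG (mem_filter.mp ha).2 (mem_filter.mp hb).2
  calc (#A : ℝ) * #B ≤ (Fintype.card V : ℝ) ^ 2 / 4 := by
        rw [← hAB]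
        nlinarith [sq_nonneg ((#A : ℝ) - #B)]
    _ ≤ _ := le_mul_of_one_le_right (by positivity) hone

theorem totalIrr_le_card_sq_div_four_mul_albertson
    {V : Type*} [Fintype V] [DecidableEq V] (G : SimpleGraph V) [DecidableRel G.Adj]
    (hG : G.Connected) (n : ℕ) (hn : Fintype.card V = n) :
    totalIrr G ≤ ((n : ℝ) ^ 2 / 4) * albertson G := by
  subst hn
  unfold totalIrr albertson
  simp_rw [absDegDiff_eq_sum_sep]
  rw [sum_comm, sum_comm (s := G.edgeFinset), mul_sum]
  exact sum_le_sum fun k _ => sum_sep_sym2_le G hG k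
end

section
/- Let T be a tree (a connected acyclic finite simple graph) with n ≥ 2 vertices. Then irr_t(T) ≤ (n−2)·irr(T). -/
/-!
Slice both irregularities by degree thresholds. For a graph `G` and `d : V → ℕ`, the sum of
`|d u - d v|` over the edges of `G` equals `∑ t, cut G {u | t < d u}`, where `cut G S` is the
number of edges of `G` between `S` and its complement (`edge_sum_eq_sum_cut`). Applying this with
`d` the degree in the tree `T`, once to `T` and once to the complete graph, reduces the claim to
`s * (n - s) ≤ (n - 2) * cut T S` for every `S = {u | t < deg u}`, with `s = #S`
(`level_inequality`).

Since `T[S]` is a forest, `cut T S ≥ ∑ u ∈ S, deg u - 2 * (s - 1)` when `S` is nonempty.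
* If `t = 0`, then `S` is everything and the left-hand side vanishes.
* If `t = 1`, then `n - s` is the number of leaves, and the degree sum `2 * (n - 1)` yields both
  `cut T S ≥ n - s` and `s ≤ n - 2`.
* If `t ≥ 2`, then degrees in `S` are at least `3`, so `cut T S ≥ s + 2`, which suffices as
  `n ≥ 4`.
-/

open Finset

/-- The number of edges of `G` leaving the vertex set `S`, each counted at its endpoint in `S`. -/
def cut {V : Type*} [Fintype V] [DecidableEq V] (G : SimpleGraph V)
    [DecidableRel G.Adj] (S : Finset V) : ℕ :=
  ∑ u ∈ S, #(G.neighborFinset u \ S)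

/-- Truncated subtraction lets the sum over edges be written as a sum over ordered pairs of
adjacent vertices: of the two orientations of an edge only one contributes. -/
lemma edge_sum_eq_sum_tsub {V : Type*} [Fintype V] [DecidableEq V] (G : SimpleGraph V)
    [DecidableRel G.Adj] (d : V → ℕ) :
    ∑ e ∈ G.edgeFinset, Sym2.lift ⟨fun u v => |(d u : ℝ) - (d v : ℝ)|,
      fun _ _ => abs_sub_comm _ _⟩ e
      = ((∑ u, ∑ v ∈ G.neighborFinset u, (d u - d v) : ℕ) : ℝ) := by
  have h1 : ∑ u, ∑ v ∈ G.neighborFinset u, (d u - d v)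
      = ∑ p ∈ (univ : Finset (V × V)).filter (fun p => G.Adj p.1 p.2), (d p.1 - d p.2) := by
    rw [Finset.sum_filter, Fintype.sum_prod_type]
    refine Finset.sum_congr rfl fun u _ => ?_
    rw [← Finset.sum_filter]
    refine Finset.sum_congr ?_ fun _ _ => rfl
    ext v
    simp
  rw [h1, ← Finset.sum_fiberwise_of_maps_to (t := G.edgeFinset)
    (g := fun p : V × V => s(p.1, p.2)) (by simp)]
  rw [Nat.cast_sum]
  refine Finset.sum_congr rfl fun e he => ?_
  induction e using Sym2.ind with
  | _ a b =>
    have hab : G.Adj a b := by simpa using he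
    have hfib : ((univ : Finset (V × V)).filter (fun p => G.Adj p.1 p.2)).filter
        (fun p => s(p.1, p.2) = s(a, b)) = {(a, b), (b, a)} := by
      ext ⟨x, y⟩
      simp only [mem_filter, mem_univ, true_and, Sym2.eq_iff, mem_insert, mem_singleton,
        Prod.mk.injEq]
      constructor
      · exact fun h => h.2
      · rintro (⟨rfl, rfl⟩ | ⟨rfl, rfl⟩)
        · exact ⟨hab, by simp⟩
        · exact ⟨hab.symm, by simp⟩
    rw [hfib, Finset.sum_pair (by simp [hab.ne])]
    simp only [Sym2.lift_mk]
    rcases le_total (d a) (d b) with h | h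
    · rw [Nat.sub_eq_zero_of_le h, zero_add, Nat.cast_sub h, abs_sub_comm, abs_of_nonneg]
      exact sub_nonneg.2 (by exact_mod_cast h)
    · rw [Nat.sub_eq_zero_of_le h, add_zero, Nat.cast_sub h, abs_of_nonneg]
      exact sub_nonneg.2 (by exact_mod_cast h)

/-- Layer-cake decomposition of an edge sum into cuts at the superlevel sets of `d`. -/
lemma edge_sum_eq_sum_cut {V : Type*} [Fintype V] [DecidableEq V] (G : SimpleGraph V)
    [DecidableRel G.Adj] (d : V → ℕ) (N : ℕ) (hN : ∀ v, d v ≤ N) :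
    ∑ e ∈ G.edgeFinset, Sym2.lift ⟨fun u v => |(d u : ℝ) - (d v : ℝ)|,
      fun _ _ => abs_sub_comm _ _⟩ e
      = ((∑ t ∈ range N, cut G (univ.filter fun u => t < d u) : ℕ) : ℝ) := by
  rw [edge_sum_eq_sum_tsub]
  congr 1
  have h1 : ∀ u v, d u - d v = ∑ t ∈ range N, if t < d u ∧ ¬ t < d v then 1 else 0 := by
    intro u v
    rw [← Finset.card_filter, ← Nat.card_Ico]
    congr 1
    ext t
    have := hN u
    simp only [mem_Ico, mem_filter, mem_range]
    lia
  simp_rw [h1]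
  rw [Finset.sum_congr rfl fun u _ => Finset.sum_comm, Finset.sum_comm]
  refine Finset.sum_congr rfl fun t _ => ?_
  rw [cut, Finset.sum_filter]
  refine Finset.sum_congr rfl fun u _ => ?_
  rw [← Finset.card_filter]
  split_ifs with h
  · congr 1
    ext v
    simp [h]
  · simp [h]

/-- In a complete graph every pair in `S ×ˢ Sᶜ` is an edge. -/
lemma cut_top {V : Type*} [Fintype V] [DecidableEq V] (S : Finset V) :
    cut (⊤ : SimpleGraph V) S = #S * (Fintype.card V - #S) := by
  rw [cut, Finset.sum_const_nat (m := Fintype.card V - #S)]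
  intro u hu
  rw [← Finset.card_compl]
  congr 1
  ext v
  simp only [mem_sdiff, SimpleGraph.mem_neighborFinset, SimpleGraph.top_adj, mem_compl]
  exact ⟨fun h => h.2, fun h => ⟨fun e => h (e ▸ hu), h⟩⟩

/-- The total irregularity is the edge sum over the complete graph, the diagonal contributing
zero. -/
lemma totalIrr_eq_top {V : Type*} [Fintype V] [DecidableEq V] (G : SimpleGraph V)
    [DecidableRel G.Adj] :
    totalIrr G = ∑ e ∈ (⊤ : SimpleGraph V).edgeFinset,
      Sym2.lift ⟨fun u v => |(G.degree u : ℝ) - (G.degree v : ℝ)|,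
        fun _ _ => abs_sub_comm _ _⟩ e := by
  rw [totalIrr]
  symm
  refine Finset.sum_subset (fun e _ => by simp) fun e _ he => ?_
  induction e using Sym2.ind with
  | _ a b =>
    have hab : a = b := by simpa using he
    simp [hab]

/-- A forest on a nonempty vertex set has fewer edges than vertices: it extends to a maximal
acyclic graph, which is a tree. -/
lemma card_edgeFinset_add_one_le {W : Type*} [Fintype W] [Nonempty W]
    (H : SimpleGraph W) [Fintype H.edgeSet] (hH : H.IsAcyclic) :
    #H.edgeFinset + 1 ≤ Fintype.card W := by
  classical
  obtain ⟨F, hHF, hF⟩ := SimpleGraph.exists_maximal_isAcyclic_of_le_isAcyclic le_top hH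
  have hFm : Maximal SimpleGraph.IsAcyclic F :=
    ⟨hF.1.2, fun K hK hle => hF.2 ⟨le_top, hK⟩ hle⟩
  have hFt := SimpleGraph.maximal_isAcyclic_iff_isTree.1 hFm
  have h1 := hFt.card_edgeFinset
  have h2 : #H.edgeFinset ≤ #F.edgeFinset :=
    Finset.card_le_card (SimpleGraph.edgeFinset_mono hHF)
  lia

/-- Double counting of the forest induced on `S`. -/
lemma sum_card_inter_le {V : Type*} [Fintype V] [DecidableEq V] (G : SimpleGraph V)
    [DecidableRel G.Adj] (hG : G.IsAcyclic) (S : Finset V) (hS : S.Nonempty) :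
    ∑ u ∈ S, #(G.neighborFinset u ∩ S) + 2 ≤ 2 * #S := by
  classical
  have : Nonempty (S : Set V) := hS.to_subtype
  have h1 := card_edgeFinset_add_one_le (G.induce (S : Set V)) (hG.induce _)
  have h2 := (G.induce (S : Set V)).sum_degrees_eq_twice_card_edges
  have h3 : ∑ u ∈ S, #(G.neighborFinset u ∩ S)
      = ∑ v : (S : Set V), (G.induce (S : Set V)).degree v := by
    rw [← Finset.sum_coe_sort S]
    refine Finset.sum_congr rfl fun v _ => ?_
    rw [← SimpleGraph.card_neighborFinset_eq_degree,
      ← Finset.card_map (Function.Embedding.subtype (· ∈ (S : Set V)))]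
    congr 1
    ext w
    simp [and_comm]
  have h4 : Fintype.card (S : Set V) = #S := by simp
  lia

/-- The tree cut inequality at each degree threshold. -/
lemma level_inequality {V : Type*} [Fintype V] [DecidableEq V] (T : SimpleGraph V)
    [DecidableRel T.Adj] (hT : T.IsTree) (h2 : 2 ≤ Fintype.card V) (t : ℕ) :
    cut ⊤ (univ.filter fun u => t < T.degree u)
      ≤ (Fintype.card V - 2) * cut T (univ.filter fun u => t < T.degree u) := by
  set S := univ.filter fun u => t < T.degree u with hSdef
  rw [cut_top]
  rcases S.eq_empty_or_nonempty with hS | hS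
  · simp [hS]
  have hin := sum_card_inter_le T hT.isAcyclic S hS
  have hsplit : ∑ u ∈ S, #(T.neighborFinset u ∩ S) + cut T S = ∑ u ∈ S, T.degree u := by
    rw [cut, ← Finset.sum_add_distrib]
    refine Finset.sum_congr rfl fun u _ => ?_
    rw [Finset.card_inter_add_card_sdiff, SimpleGraph.card_neighborFinset_eq_degree]
  have htot : ∑ u, T.degree u + 2 = 2 * Fintype.card V := by
    have := T.sum_degrees_eq_twice_card_edges
    have := hT.card_edgeFinset
    lia
  have hcompl := Finset.sum_add_sum_compl S fun u => T.degree u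
  have hcard := Finset.card_add_card_compl S
  have hlow : #S * (t + 1) ≤ ∑ u ∈ S, T.degree u :=
    Finset.card_nsmul_le_sum S (fun u => T.degree u) (t + 1) fun u hu => (mem_filter.1 hu).2
  have hup : ∑ u ∈ Sᶜ, T.degree u ≤ #Sᶜ * t :=
    Finset.sum_le_card_nsmul _ _ _ fun u hu => by simpa [hSdef] using hu
  have hpos : ∀ u, 1 ≤ T.degree u := fun u => by
    have : Nontrivial V := Fintype.one_lt_card_iff_nontrivial.1 h2
    exact hT.connected.preconnected.degree_pos_of_nontrivial u
  have hcpos : #Sᶜ * 1 ≤ ∑ u ∈ Sᶜ, T.degree u :=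
    Finset.card_nsmul_le_sum Sᶜ (fun u => T.degree u) 1 fun u _ => hpos u
  have hmax : ∃ u, t < T.degree u ∧ T.degree u < Fintype.card V := by
    obtain ⟨u, hu⟩ := hS
    exact ⟨u, (mem_filter.1 hu).2, T.degree_lt_card_verts u⟩
  obtain ⟨w, hw1, hw2⟩ := hmax
  have hs : 1 ≤ #S := hS.card_pos
  generalize hc : cut T S = c at *
  obtain ⟨k, hk⟩ := Nat.exists_eq_add_of_le h2
  have hk' : Fintype.card V - 2 = k := by lia
  have hm : Fintype.card V - #S = #Sᶜ := by lia
  rw [hk', hm]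
  match t, hSdef with
  | 0, hSdef =>
    have : Sᶜ = ∅ := by
      ext u
      have := hpos u
      simp [hSdef]
      lia
    simp [this]
  | 1, _ =>
    -- The vertices outside `S` are the leaves, which contribute exactly `#Sᶜ` to the degree sum `2 * (n - 1)`.
    have h3 : #S ≤ k := by lia
    have h4 : #Sᶜ ≤ c := by lia
    exact Nat.mul_le_mul h3 h4
  | t + 2, _ =>
    have h5 : #S * 3 ≤ ∑ u ∈ S, T.degree u :=
      (Nat.mul_le_mul_left _ (by lia)).trans hlow
    have h6 : #S + 2 ≤ c := by lia
    have h7 : #Sᶜ ≤ k + 1 := by lia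
    calc #S * #Sᶜ ≤ #S * (k + 1) := Nat.mul_le_mul_left _ h7
      _ = k * #S + #S := by ring
      _ ≤ k * #S + k * 2 := by lia
      _ = k * (#S + 2) := by ring
      _ ≤ k * c := Nat.mul_le_mul_left _ h6

theorem totalIrr_le_card_sub_two_mul_albertson_of_isTree
    {V : Type*} [Fintype V] [DecidableEq V] (T : SimpleGraph V) [DecidableRel T.Adj]
    (hT : T.IsTree) (n : ℕ) (hn : Fintype.card V = n) (h2 : 2 ≤ n) :
    totalIrr T ≤ ((n : ℝ) - 2) * albertson T := by
  subst hn
  have hN : ∀ v, T.degree v ≤ Fintype.card V := fun v => (T.degree_lt_card_verts v).le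
  rw [totalIrr_eq_top, albertson, edge_sum_eq_sum_cut _ _ _ hN, edge_sum_eq_sum_cut _ _ _ hN]
  have hcast : (Fintype.card V : ℝ) - 2 = ((Fintype.card V - 2 : ℕ) : ℝ) := by
    rw [Nat.cast_sub h2, Nat.cast_ofNat]
  rw [hcast, ← Nat.cast_mul, Nat.cast_le, Finset.mul_sum]
  exact Finset.sum_le_sum fun t _ => level_inequality T hT h2 t
end

section
/- Let G be a finite simple graph and let p, q > 1 be real numbers with 1/p + 1/q = 1. Then irr_p(G)·irr_q(G) ≥ F(G) − 2·M_2(G). -/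
/-!
Every vertex lies on `d_v` edges, so double counting the incidences gives
`F(G) = Σ_{uv ∈ E(G)} (d_u² + d_v²)`, whence `F(G) - 2 M₂(G) = Σ_{uv ∈ E(G)} |d_u - d_v|²`.
Writing each summand as `|d_u - d_v| * |d_u - d_v|`, the claim is Hölder's inequality with the
conjugate exponents `p` and `q`.
-/

open Finset

/-- The general Albertson irregularity index:
`irr_p(G) = (Σ_{uv ∈ E(G)} |d_u − d_v|^p)^{1/p}`. -/
noncomputable def generalAlbertson {V : Type*} [Fintype V] [DecidableEq V] (G : SimpleGraph V)
    [DecidableRel G.Adj] (p : ℝ) : ℝ :=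
  (∑ e ∈ G.edgeFinset,
    Sym2.lift ⟨fun u v => |(G.degree u : ℝ) - (G.degree v : ℝ)| ^ p,
      fun u v => by simp only [abs_sub_comm]⟩ e) ^ (1 / p)

/-- The forgotten index: `F(G) = Σ_{v ∈ V(G)} d_v³`. -/
def forgottenIndex {V : Type*} [Fintype V] [DecidableEq V] (G : SimpleGraph V)
    [DecidableRel G.Adj] : ℝ :=
  ∑ v : V, (G.degree v : ℝ) ^ 3

/-- The second Zagreb index: `M₂(G) = Σ_{uv ∈ E(G)} d_u·d_v`. -/
noncomputable def secondZagreb {V : Type*} [Fintype V] [DecidableEq V] (G : SimpleGraph V)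
    [DecidableRel G.Adj] : ℝ :=
  ∑ e ∈ G.edgeFinset,
    Sym2.lift ⟨fun u v => (G.degree u : ℝ) * (G.degree v : ℝ), fun u v => by ring⟩ e

/-- Double counting of incidences: a vertex weight `f`, summed over the endpoints of all edges,
counts each `f v` exactly `deg v` times. -/
theorem sum_degree_mul_eq_sum_edges {V : Type*} [Fintype V] [DecidableEq V] (G : SimpleGraph V)
    [DecidableRel G.Adj] (f : V → ℝ) :
    ∑ v : V, (G.degree v : ℝ) * f v =
      ∑ e ∈ G.edgeFinset, Sym2.lift ⟨fun u v => f u + f v, fun _ _ => add_comm _ _⟩ e := by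
  have h1 : ∀ v : V, (G.degree v : ℝ) * f v = ∑ _e ∈ G.incidenceFinset v, f v := by
    intro v
    simp [SimpleGraph.card_incidenceFinset_eq_degree]
  simp only [h1]
  rw [Finset.sum_comm' (t' := G.edgeFinset) (s' := fun e => Finset.univ.filter (fun v => v ∈ e))]
  · refine Finset.sum_congr rfl fun e he => ?_
    induction e using Sym2.ind with
    | _ a b =>
      have hab : a ≠ b := (by simpa using he : G.Adj a b).ne
      have h2 : Finset.univ.filter (fun v => v ∈ s(a, b)) = {a, b} := by
        ext v
        simp
      rw [h2, Finset.sum_pair hab, Sym2.lift_mk]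
  · intro v e
    simp [SimpleGraph.mem_incidenceFinset, SimpleGraph.incidenceSet, and_comm]

/-- `F(G) - 2 M₂(G)` is the sum of `|d_u - d_v|²` over the edges, with the square written as the
product to which Hölder's inequality applies. -/
theorem forgottenIndex_sub_eq {V : Type*} [Fintype V] [DecidableEq V] (G : SimpleGraph V)
    [DecidableRel G.Adj] :
    forgottenIndex G - 2 * secondZagreb G =
      ∑ e ∈ G.edgeFinset,
        Sym2.lift ⟨fun u v => |(G.degree u : ℝ) - (G.degree v : ℝ)|,
          fun u v => abs_sub_comm _ _⟩ e *
        Sym2.lift ⟨fun u v => |(G.degree u : ℝ) - (G.degree v : ℝ)|,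
          fun u v => abs_sub_comm _ _⟩ e := by
  have hF : forgottenIndex G = ∑ v : V, (G.degree v : ℝ) * (G.degree v : ℝ) ^ 2 :=
    Finset.sum_congr rfl fun v _ => by ring
  rw [hF, sum_degree_mul_eq_sum_edges G (fun v => (G.degree v : ℝ) ^ 2), secondZagreb,
    Finset.mul_sum, ← Finset.sum_sub_distrib]
  refine Finset.sum_congr rfl fun e _ => ?_
  induction e using Sym2.ind with
  | _ a b =>
    simp only [Sym2.lift_mk, abs_mul_abs_self]
    ring

theorem generalAlbertson_mul_generalAlbertson_ge
    {V : Type*} [Fintype V] [DecidableEq V] (G : SimpleGraph V) [DecidableRel G.Adj]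
    (p q : ℝ) (hp : 1 < p) (hq : 1 < q) (hpq : 1 / p + 1 / q = 1) :
    forgottenIndex G - 2 * secondZagreb G ≤ generalAlbertson G p * generalAlbertson G q := by
  have hc : p.HolderConjugate q := Real.holderConjugate_iff.2 ⟨hp, by simpa using hpq⟩
  have key : ∀ r : ℝ, generalAlbertson G r = (∑ e ∈ G.edgeFinset,
      |Sym2.lift ⟨fun u v => |(G.degree u : ℝ) - (G.degree v : ℝ)|,
          fun u v => abs_sub_comm _ _⟩ e| ^ r) ^ (1 / r) := by
    intro r
    unfold generalAlbertson
    congr 1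
    refine Finset.sum_congr rfl fun e _ => ?_
    induction e using Sym2.ind with
    | _ a b => simp only [Sym2.lift_mk, abs_abs]
  rw [forgottenIndex_sub_eq, key p, key q]
  exact Real.inner_le_Lp_mul_Lq _ _ _ hc
end

section
/- Let (x_1,...,x_n), (y_1,...,y_n), (a_1,...,a_n), (b_1,...,b_n) be non-increasing sequences of nonnegative real numbers such that for every k with 1 ≤ k ≤ n, Σ_{i=1}^k a_i ≤ Σ_{i=1}^k x_i and Σ_{i=1}^k b_i ≤ Σ_{i=1}^k y_i. Then for every k with 1 ≤ k ≤ n, Σ_{i=1}^k a_i·b_i ≤ Σ_{i=1}^k x_i·y_i. -/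
/-!
By summation by parts, a nonnegative non-increasing weight `w` preserves domination of partial
sums: if the partial sums of `u` are at most those of `v`, then `∑ w * u ≤ ∑ w * v`.
Applying this with weight `a` to `b, y`, and then with weight `y` to `a, x`, gives
`∑ a * b ≤ ∑ a * y ≤ ∑ x * y`.
-/

open Finset

/-- A summation-by-parts inequality; keeping the last weight as a factor on the left makes the
induction go through without assuming the weights nonnegative. -/
lemma last_weight_mul_sum_le (w d : ℕ → ℝ) (m : ℕ)
    (hw : ∀ i < m, w (i + 1) ≤ w i)
    (hd : ∀ k ≤ m, 0 ≤ ∑ i ∈ Finset.range k, d i) :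
    w m * ∑ i ∈ Finset.range (m + 1), d i ≤ ∑ i ∈ Finset.range (m + 1), w i * d i := by
  induction m with
  | zero => simp
  | succ m ih =>
    have h1 := ih (fun i hi => hw i (by omega)) (fun k hk => hd k (by omega))
    have h2 := mul_le_mul_of_nonneg_right (hw m (by omega)) (hd (m + 1) le_rfl)
    rw [Finset.sum_range_succ _ (m + 1), Finset.sum_range_succ _ (m + 1), mul_add]
    linarith

lemma weighted_sum_le_weighted_sum (n : ℕ) (w u v : ℕ → ℝ)
    (hw0 : ∀ i < n, 0 ≤ w i) (hw : ∀ i j, i ≤ j → j < n → w j ≤ w i)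
    (huv : ∀ k ≤ n, ∑ i ∈ Finset.range k, u i ≤ ∑ i ∈ Finset.range k, v i) :
    ∀ k ≤ n, ∑ i ∈ Finset.range k, w i * u i ≤ ∑ i ∈ Finset.range k, w i * v i := by
  intro k hk
  cases k with
  | zero => simp
  | succ m =>
    have hd : ∀ k ≤ n, 0 ≤ ∑ i ∈ Finset.range k, (v i - u i) := fun k hk => by
      rw [Finset.sum_sub_distrib]
      exact sub_nonneg.2 (huv k hk)
    have h := last_weight_mul_sum_le w (fun i => v i - u i) m
      (fun i hi => hw i (i + 1) (by omega) (by omega)) (fun k hk' => hd k (by omega))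
    have h' := (mul_nonneg (hw0 m (by omega)) (hd (m + 1) hk)).trans h
    simp only [mul_sub, Finset.sum_sub_distrib] at h'
    exact sub_nonneg.1 h'

theorem weakly_majorized_pointwise_mul
    (n : ℕ) (x y a b : ℕ → ℝ)
    (hx0 : ∀ i < n, 0 ≤ x i) (hy0 : ∀ i < n, 0 ≤ y i)
    (ha0 : ∀ i < n, 0 ≤ a i) (hb0 : ∀ i < n, 0 ≤ b i)
    (hx : ∀ i j, i ≤ j → j < n → x j ≤ x i)
    (hy : ∀ i j, i ≤ j → j < n → y j ≤ y i)
    (ha : ∀ i j, i ≤ j → j < n → a j ≤ a i)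
    (hb : ∀ i j, i ≤ j → j < n → b j ≤ b i)
    (hax : ∀ k ≤ n, ∑ i ∈ Finset.range k, a i ≤ ∑ i ∈ Finset.range k, x i)
    (hby : ∀ k ≤ n, ∑ i ∈ Finset.range k, b i ≤ ∑ i ∈ Finset.range k, y i) :
    ∀ k ≤ n, ∑ i ∈ Finset.range k, a i * b i ≤ ∑ i ∈ Finset.range k, x i * y i := by
  intro k hk
  have h1 := weighted_sum_le_weighted_sum n a b y ha0 ha hby k hk
  have h2 := weighted_sum_le_weighted_sum n y a x hy0 hy hax k hk
  simp only [mul_comm (y _)] at h2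
  exact h1.trans h2
end

section
/- Let G be a finite simple graph and let p ≥ 2 be a real number. Then irr_p(G) ≤ √(F(G) − 2·M_2(G)). -/
/-!
The quantity under the square root is the sum of `(d_u - d_v)^2` over the edges `uv`. Indeed a
vertex `v` lies on exactly `d_v` edges, so counting incident pairs of a vertex and an edge gives
`F(G) = ∑_{uv} (d_u^2 + d_v^2)` (`forgottenIndex_eq_sum_edges`), and subtracting `2 d_u d_v` from
each term completes the square. The claim thus says that the `ℓ^p` norm of the family
`|d_u - d_v|` is at most its `ℓ^2` norm when `p ≥ 2`, which follows from the superadditivity of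
`x ↦ x ^ (p / 2)` on the nonnegative reals (`sum_rpow_le_rpow_sum`).
-/

open Finset

theorem sum_rpow_le_rpow_sum {ι : Type*} (s : Finset ι) (a : ι → ℝ) (ha : ∀ i, 0 ≤ a i)
    {q : ℝ} (hq : 1 ≤ q) : ∑ i ∈ s, a i ^ q ≤ (∑ i ∈ s, a i) ^ q := by
  classical
  induction s using Finset.induction_on with
  | empty => simp [Real.zero_rpow (by linarith : q ≠ 0)]
  | insert i s hi ih =>
    rw [Finset.sum_insert hi, Finset.sum_insert hi]
    exact (add_le_add le_rfl ih).trans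
      (Real.add_rpow_le_rpow_add (ha i) (Finset.sum_nonneg fun j _ => ha j) hq)

theorem forgottenIndex_eq_sum_edges {V : Type*} [Fintype V] [DecidableEq V] (G : SimpleGraph V)
    [DecidableRel G.Adj] :
    forgottenIndex G = ∑ e ∈ G.edgeFinset,
      Sym2.lift ⟨fun u v => (G.degree u : ℝ) ^ 2 + (G.degree v : ℝ) ^ 2,
        fun u v => by ring⟩ e := by
  have h1 : ∀ v : V, (G.degree v : ℝ) ^ 3 =
      ∑ e ∈ G.edgeFinset, if v ∈ e then (G.degree v : ℝ) ^ 2 else 0 := by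
    intro v
    rw [← Finset.sum_filter, ← G.incidenceFinset_eq_filter, Finset.sum_const,
      G.card_incidenceFinset_eq_degree, nsmul_eq_mul]
    ring
  unfold forgottenIndex
  rw [Finset.sum_congr rfl fun v _ => h1 v, Finset.sum_comm]
  refine Finset.sum_congr rfl fun e he => ?_
  induction e using Sym2.ind with
  | _ x y =>
    have hxy : x ≠ y := G.ne_of_adj (by simpa using he)
    rw [← Finset.sum_filter]
    have h2 : ({v : V | v ∈ s(x, y)} : Finset V) = {x, y} := by
      ext v
      simp
    rw [h2, Finset.sum_pair hxy]
    rfl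

theorem generalAlbertson_le_sqrt
    {V : Type*} [Fintype V] [DecidableEq V] (G : SimpleGraph V) [DecidableRel G.Adj]
    (p : ℝ) (hp : 2 ≤ p) :
    generalAlbertson G p ≤ Real.sqrt (forgottenIndex G - 2 * secondZagreb G) := by
  have hS : forgottenIndex G - 2 * secondZagreb G = ∑ e ∈ G.edgeFinset,
      Sym2.lift ⟨fun u v => ((G.degree u : ℝ) - (G.degree v : ℝ)) ^ 2,
        fun u v => by ring⟩ e := by
    rw [forgottenIndex_eq_sum_edges, secondZagreb, Finset.mul_sum, ← Finset.sum_sub_distrib]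
    refine Finset.sum_congr rfl fun e _ => ?_
    induction e using Sym2.ind with
    | _ x y => simp only [Sym2.lift_mk]; ring
  rw [hS]
  set a : Sym2 V → ℝ := Sym2.lift ⟨fun u v => ((G.degree u : ℝ) - (G.degree v : ℝ)) ^ 2,
    fun u v => by ring⟩ with ha_def
  have ha : ∀ e, 0 ≤ a e := by
    intro e
    induction e using Sym2.ind with
    | _ x y => simp only [ha_def, Sym2.lift_mk]; positivity
  have hpow : generalAlbertson G p = (∑ e ∈ G.edgeFinset, a e ^ (p / 2)) ^ (1 / p) := by
    unfold generalAlbertson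
    congr 1
    refine Finset.sum_congr rfl fun e _ => ?_
    induction e using Sym2.ind with
    | _ x y =>
      simp only [ha_def, Sym2.lift_mk]
      rw [← sq_abs, ← Real.rpow_natCast, ← Real.rpow_mul (abs_nonneg _)]
      congr 1
      push_cast
      ring
  rw [hpow, Real.sqrt_eq_rpow]
  have hp0 : p ≠ 0 := by linarith
  calc (∑ e ∈ G.edgeFinset, a e ^ (p / 2)) ^ (1 / p)
      ≤ ((∑ e ∈ G.edgeFinset, a e) ^ (p / 2)) ^ (1 / p) :=
        Real.rpow_le_rpow (Finset.sum_nonneg fun e _ => Real.rpow_nonneg (ha e) _)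
          (sum_rpow_le_rpow_sum _ a ha (by linarith)) (by positivity)
    _ = (∑ e ∈ G.edgeFinset, a e) ^ (1 / 2 : ℝ) := by
        rw [← Real.rpow_mul (Finset.sum_nonneg fun e _ => ha e)]
        congr 1
        field_simp
end

section
/- Let T be a tree (a connected acyclic finite simple graph) with n ≥ 3 vertices and let p ≥ 1 be a real number. Then 2^{1/p} ≤ irr_p(T) ≤ (n−2)·(n−1)^{1/p}. -/
/-! In a tree on `n ≥ 3` vertices all degrees lie in `[1, n - 1]`, so each of the `n - 1` edges
contributes at most `(n - 2) ^ p` to the sum, which gives the upper bound. For the lower bound,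
take two distinct leaves. Two leaves are never adjacent, as they would form a whole connected
component (`card_le_two_of_adj_leaves`); hence the edges at these leaves are distinct and each
joins degree `1` to degree at least `2`, so each contributes at least `1`. -/

open Finset

/-- Adjacent vertices of degree one form a connected component on their own. -/
lemma card_le_two_of_adj_leaves {V : Type*} [Fintype V] [DecidableEq V] (G : SimpleGraph V)
    [DecidableRel G.Adj] (hG : G.Connected) {u v : V} (huv : G.Adj u v)
    (hu : G.degree u = 1) (hv : G.degree v = 1) : Fintype.card V ≤ 2 := by
  obtain ⟨a, -, hua⟩ := SimpleGraph.degree_eq_one_iff_existsUnique_adj.1 hu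
  obtain ⟨b, -, hvb⟩ := SimpleGraph.degree_eq_one_iff_existsUnique_adj.1 hv
  obtain rfl := hua v huv
  obtain rfl := hvb u huv.symm
  have key : ∀ x y : V, G.Walk x y → x ∈ ({u, v} : Finset V) → y ∈ ({u, v} : Finset V) := by
    intro x y w
    induction w with
    | nil => exact id
    | cons h _ ih =>
      intro hx
      apply ih
      rcases Finset.mem_insert.1 hx with rfl | hx
      · simp [hua _ h]
      · obtain rfl := Finset.mem_singleton.1 hx
        simp [hvb _ h]
  have huniv : (Finset.univ : Finset V) ⊆ {u, v} := by
    intro y _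
    obtain ⟨w⟩ := hG.preconnected u y
    exact key u y w (by simp)
  exact (Finset.card_le_card huniv).trans Finset.card_le_two

theorem generalAlbertson_bounds_of_isTree
    {V : Type*} [Fintype V] [DecidableEq V] (T : SimpleGraph V) [DecidableRel T.Adj]
    (hT : T.IsTree) (n : ℕ) (hn : Fintype.card V = n) (h3 : 3 ≤ n)
    (p : ℝ) (hp : 1 ≤ p) :
    (2 : ℝ) ^ (1 / p) ≤ generalAlbertson T p ∧
    generalAlbertson T p ≤ ((n : ℝ) - 2) * ((n : ℝ) - 1) ^ (1 / p) := by
  have hp0 : 0 < p := by linarith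
  have hn3 : (3 : ℝ) ≤ n := by exact_mod_cast h3
  have : Nontrivial V := Fintype.one_lt_card_iff_nontrivial.1 (by omega)
  have hpos : ∀ v, 1 ≤ T.degree v := fun v => hT.connected.preconnected.degree_pos_of_nontrivial v
  have hleaf : ∀ u v, T.Adj u v → T.degree u = 1 → 2 ≤ T.degree v := by
    intro u v huv hu
    by_contra hv
    have := card_le_two_of_adj_leaves T hT.connected huv hu (by have := hpos v; omega)
    omega
  unfold generalAlbertson
  set w : Sym2 V → ℝ := Sym2.lift ⟨fun u v => |(T.degree u : ℝ) - (T.degree v : ℝ)| ^ p,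
      fun u v => by simp only [abs_sub_comm]⟩ with hw
  have hw_mk : ∀ u v, w s(u, v) = |(T.degree u : ℝ) - (T.degree v : ℝ)| ^ p := fun u v => rfl
  have hw0 : ∀ e, 0 ≤ w e := by
    intro e
    induction e with
    | _ u v => rw [hw_mk]; positivity
  constructor
  · apply Real.rpow_le_rpow (by norm_num) _ (by positivity)
    have hone : ∀ u v, T.Adj u v → T.degree u = 1 → 1 ≤ w s(u, v) := by
      intro u v huv hu
      have h2 : (2 : ℝ) ≤ T.degree v := by exact_mod_cast hleaf u v huv hu
      rw [hw_mk, hu]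
      apply Real.one_le_rpow _ hp0.le
      rw [abs_sub_comm]
      exact le_trans (by push_cast; linarith) (le_abs_self _)
    obtain ⟨u, v, huv, hu, hv⟩ := hT.exists_ne_and_degree_eq_one
    obtain ⟨a, hua, -⟩ := SimpleGraph.degree_eq_one_iff_existsUnique_adj.1 hu
    obtain ⟨b, hvb, -⟩ := SimpleGraph.degree_eq_one_iff_existsUnique_adj.1 hv
    have hne : s(u, a) ≠ s(v, b) := by
      intro h
      rcases Sym2.eq_iff.1 h with ⟨h, -⟩ | ⟨-, rfl⟩
      · exact huv h
      · have := hleaf u a hua hu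
        omega
    calc (2 : ℝ) ≤ w s(u, a) + w s(v, b) := by linarith [hone u a hua hu, hone v b hvb hv]
      _ = ∑ e ∈ {s(u, a), s(v, b)}, w e := (Finset.sum_pair hne).symm
      _ ≤ ∑ e ∈ T.edgeFinset, w e := by
        apply Finset.sum_le_sum_of_subset_of_nonneg
        · intro e he
          rcases Finset.mem_insert.1 he with rfl | he
          · simpa using hua
          · obtain rfl := Finset.mem_singleton.1 he
            simpa using hvb
        · exact fun e _ _ => hw0 e
  · have hle : ∀ e ∈ T.edgeFinset, w e ≤ ((n : ℝ) - 2) ^ p := by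
      intro e _
      induction e with
      | _ u v =>
        have hmax : ∀ x, (T.degree x : ℝ) ≤ n - 1 := by
          intro x
          have := T.degree_lt_card_verts x
          rw [hn] at this
          have : (T.degree x : ℝ) + 1 ≤ n := by exact_mod_cast this
          linarith
        have hmin : ∀ x, (1 : ℝ) ≤ T.degree x := fun x => by exact_mod_cast hpos x
        rw [hw_mk]
        apply Real.rpow_le_rpow (abs_nonneg _) _ hp0.le
        rw [abs_le]
        constructor <;> linarith [hmax u, hmax v, hmin u, hmin v]
    have hcard : (T.edgeFinset.card : ℝ) = n - 1 := by
      have := hT.card_edgeFinset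
      rw [hn] at this
      rw [eq_sub_iff_add_eq]
      exact_mod_cast this
    have hsum : ∑ e ∈ T.edgeFinset, w e ≤ ((n : ℝ) - 1) * ((n : ℝ) - 2) ^ p := by
      have := Finset.sum_le_card_nsmul _ _ _ hle
      rwa [nsmul_eq_mul, hcard] at this
    have hn1 : (0 : ℝ) ≤ n - 1 := by linarith
    have hn2 : (0 : ℝ) ≤ n - 2 := by linarith
    calc (∑ e ∈ T.edgeFinset, w e) ^ (1 / p)
        ≤ (((n : ℝ) - 1) * ((n : ℝ) - 2) ^ p) ^ (1 / p) :=
          Real.rpow_le_rpow (Finset.sum_nonneg fun e _ => hw0 e) hsum (by positivity)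
      _ = ((n : ℝ) - 2) * ((n : ℝ) - 1) ^ (1 / p) := by
        rw [Real.mul_rpow hn1 (Real.rpow_nonneg hn2 _), ← Real.rpow_mul hn2,
          mul_one_div_cancel hp0.ne', Real.rpow_one, mul_comm]
end

section
/- Let T be a tree (a connected acyclic finite simple graph) with n vertices, maximum vertex degree Δ ≥ 3 and minimum vertex degree δ, and let α be a real number with 0 ≤ α ≤ 1. Then irr(T) ≤ ⌊(3n² − 10n)/2⌋·2^α + Δ² − n·δ. -/
/-!
Every vertex of a nontrivial tree has degree between `1` and `Δ`, so each of its `n - 1` edges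
contributes at most `Δ - 1` and `irr(T) ≤ (n - 1)(Δ - 1)`. On the other side `δ = 1`, the floor is
nonnegative because `n ≥ Δ + 1 ≥ 4`, and `2 ^ α ≥ 1`, so the right-hand side is at least
`(3n² - 10n)/2 - 1 + Δ² - n`. With `Δ = 3 + a` and `n = 4 + b`, this lower bound exceeds
`(n - 1)(Δ - 1)` by `a² - ab + (3/2)b² + 3a + 4b + 2`, which is positive for `a, b ≥ 0`.
-/

open Finset

theorem albertson_upper_bound_of_isTree
    {V : Type*} [Fintype V] [DecidableEq V] (T : SimpleGraph V) [DecidableRel T.Adj]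
    (hT : T.IsTree) (n : ℕ) (hn : Fintype.card V = n)
    (hΔ : 3 ≤ T.maxDegree) (α : ℝ) (hα0 : 0 ≤ α) (hα1 : α ≤ 1) :
    albertson T ≤
      (⌊(3 * (n : ℝ) ^ 2 - 10 * (n : ℝ)) / 2⌋ : ℝ) * 2 ^ α
        + (T.maxDegree : ℝ) ^ 2 - (n : ℝ) * (T.minDegree : ℝ) := by
  have : Nonempty V := hT.connected.nonempty
  have hn4 : 4 ≤ n := by
    have := T.maxDegree_lt_card_verts
    omega
  have : Nontrivial V := Fintype.one_lt_card_iff_nontrivial.mp (by omega)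
  have hδ : T.minDegree = 1 := hT.minDegree_eq_one_of_nontrivial
  have hdeg (v : V) : (1 : ℝ) ≤ T.degree v ∧ (T.degree v : ℝ) ≤ T.maxDegree := by
    have h1 := T.minDegree_le_degree v
    rw [hδ] at h1
    exact ⟨by exact_mod_cast h1, by exact_mod_cast T.degree_le_maxDegree v⟩
  have hcard : (#T.edgeFinset : ℝ) = n - 1 := by
    have := hT.card_edgeFinset
    rw [hn] at this
    rw [← this]
    push_cast
    ring
  -- Both endpoints have degree in `[1, Δ]`, so each edge contributes at most `Δ - 1`.
  have hirr : albertson T ≤ ((n : ℝ) - 1) * (T.maxDegree - 1) := by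
    rw [← hcard, ← nsmul_eq_mul]
    refine Finset.sum_le_card_nsmul _ _ _ fun e _ => ?_
    induction e with
    | _ u v =>
      rw [Sym2.lift_mk, abs_le]
      constructor <;> linarith [hdeg u, hdeg v]
  have hN : (4 : ℝ) ≤ n := by exact_mod_cast hn4
  have hD : (3 : ℝ) ≤ T.maxDegree := by exact_mod_cast hΔ
  have hpow : (1 : ℝ) ≤ 2 ^ α := Real.one_le_rpow (by norm_num) hα0
  have hfl := Int.sub_one_lt_floor ((3 * (n : ℝ) ^ 2 - 10 * (n : ℝ)) / 2)
  have hfl0 : (0 : ℝ) ≤ ⌊(3 * (n : ℝ) ^ 2 - 10 * (n : ℝ)) / 2⌋ := by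
    have hx : 0 ≤ (3 * (n : ℝ) ^ 2 - 10 * (n : ℝ)) / 2 := by nlinarith
    exact Int.cast_nonneg (Int.floor_nonneg.mpr hx)
  have hmul := le_mul_of_one_le_right hfl0 hpow
  rw [hδ, Nat.cast_one, mul_one]
  -- Completing the square in `Δ - 3` handles the quadratic part `a² - ab + (3/2)b²`.
  nlinarith [sq_nonneg (((T.maxDegree : ℝ) - 3) - ((n : ℝ) - 4) / 2), sq_nonneg ((n : ℝ) - 4)]
end
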